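/- Let ρ : (0,∞) → (0,∞) satisfy ρ(t) → ∞ and ρ(t)/t → 0 as t → ∞. Then μ^{ℓ,r}_t([ρ(t), ∞)) = (E[R^γ]/γ)·t·ρ(t)^{−γ}·(1+o(1)) as t → ∞; equivalently, μ^{ℓ,r}_t([ρ(t),∞)) / (t·ρ(t)^{−γ}) → E[R^γ]/γ. -/

import Mathlib

open MeasureTheory Filter Set
open scoped ENNReal NNReal Topology

noncomputable section

/-- `ℓ_t(s,u)`: the length of the interval `[s,s+u] ∩ [0,t]`. -/
def ellK (t s u : ℝ) : ℝ := max 0 (min (s + u) t - max s 0)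

/-- The intensity measure `u^{-γ-1} du` on `(0,∞)`. -/
def muU (γ : ℝ) : Measure ℝ :=
  (volume.restrict (Set.Ioi 0)).withDensity fun u => ENNReal.ofReal (u ^ (-γ - 1))

/-- The measure `μ^ℓ_t` on `(0,∞)`:
`μ^ℓ_t(A) = ∫_ℝ ∫_0^∞ 1{ℓ_t(s,u) ∈ A} u^{-γ-1} du ds`. -/
def muEll (γ t : ℝ) : Measure ℝ :=
  (Measure.map (fun p : ℝ × ℝ => ellK t p.1 p.2)
    ((volume : Measure ℝ).prod (muU γ))).restrict (Set.Ioi 0)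

/-- The measure `μ^{ℓ,r}_t` on `(0,∞)`:
`μ^{ℓ,r}_t(A) = ∫_{(0,∞)} ∫_{(0,∞)} 1{rℓ ∈ A} μ^ℓ_t(dℓ) F_R(dr)`. -/
def muEllR (γ t : ℝ) (FR : Measure ℝ) : Measure ℝ :=
  (Measure.map (fun p : ℝ × ℝ => p.1 * p.2) (FR.prod (muEll γ t))).restrict (Set.Ioi 0)

/-- The measure `ν` on `[0,1]`: density `s^{-(γ+1)} + ((2-γ)/γ)·s^{-γ}` on `(0,1)` with
respect to Lebesgue measure, together with an atom of mass `1/(γ(γ-1))` at the point `1`. -/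
def nuM (γ : ℝ) : Measure ℝ :=
  (volume.restrict (Set.Ioo 0 1)).withDensity
      (fun s => ENNReal.ofReal (s ^ (-(γ + 1)) + (2 - γ) / γ * s ^ (-γ)))
    + (Real.toNNReal (1 / (γ * (γ - 1)))) • Measure.dirac 1

instance nuM.sigmaFinite (γ : ℝ) : SigmaFinite (nuM γ) := by
  unfold nuM; infer_instance

end

lemma lint_rpow_Ici (a x : ℝ) (ha : a < -1) (hx : 0 < x) :
    ∫⁻ y in Set.Ici x, ENNReal.ofReal (y ^ a) = ENNReal.ofReal (-x ^ (a + 1) / (a + 1)) := by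
  rw [← restrict_Ioi_eq_restrict_Ici, ← integral_Ioi_rpow_of_lt ha hx,
    ofReal_integral_eq_lintegral_ofReal (integrableOn_Ioi_rpow_of_lt ha hx)]
  filter_upwards [ae_restrict_mem measurableSet_Ioi] with y hy
  exact Real.rpow_nonneg (hx.trans hy).le _

lemma muU_Ici (γ y : ℝ) (hγ : 1 < γ) (hy : 0 < y) :
    muU γ (Set.Ici y) = ENNReal.ofReal (y ^ (-γ) / γ) := by
  have h : Set.Ici y ∩ Set.Ioi 0 = Set.Ici y := by
    ext z; simp only [mem_inter_iff, mem_Ici, mem_Ioi]; constructor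
    · exact fun h => h.1
    · exact fun h => ⟨h, hy.trans_le h⟩
  rw [muU, withDensity_apply _ measurableSet_Ici, Measure.restrict_restrict measurableSet_Ici, h,
    lint_rpow_Ici _ _ (by linarith) hy]
  congr 1
  rw [show -γ - 1 + 1 = -γ by ring, neg_div_neg_eq]

lemma measurable_ellK (t : ℝ) : Measurable (fun p : ℝ × ℝ => ellK t p.1 p.2) := by
  unfold ellK; fun_prop

instance muU_sfinite (γ : ℝ) : SFinite (muU γ) := by unfold muU; infer_instance
instance muEll_sfinite (γ t : ℝ) : SFinite (muEll γ t) := by unfold muEll; infer_instance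

lemma muEll_Ici_eq (γ t x : ℝ) (hx : 0 < x) :
    muEll γ t (Set.Ici x) = ∫⁻ s, muU γ {u | x ≤ ellK t s u} := by
  have h : Set.Ici x ∩ Set.Ioi 0 = Set.Ici x := by
    ext z; simp only [mem_inter_iff, mem_Ici, mem_Ioi]; constructor
    · exact fun h => h.1
    · exact fun h => ⟨h, hx.trans_le h⟩
  rw [muEll, Measure.restrict_apply measurableSet_Ici, h,
    Measure.map_apply (measurable_ellK t) measurableSet_Ici,
    Measure.prod_apply (measurable_ellK t measurableSet_Ici)]
  rfl

lemma le_ellK_iff (t s u x : ℝ) (hx : 0 < x) :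
    x ≤ ellK t s u ↔ x ≤ t ∧ s ≤ t - x ∧ max x (x - s) ≤ u := by
  unfold ellK
  rw [le_max_iff, max_le_iff, le_sub_iff_add_le, le_min_iff, ← le_sub_iff_add_le', 
    ← le_sub_iff_add_le', max_le_iff, max_le_iff]
  constructor
  · rintro (h | h)
    · linarith
    · refine ⟨?_, ?_, ?_, ?_⟩ <;> linarith [h.1.1, h.1.2, h.2.1, h.2.2]
  · rintro ⟨h1, h2, h3, h4⟩
    right
    refine ⟨⟨?_, ?_⟩, ?_, ?_⟩ <;> linarith

lemma muEll_Ici_gt (γ t x : ℝ) (hx : 0 < x) (hxt : t < x) : muEll γ t (Set.Ici x) = 0 := by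
  rw [muEll_Ici_eq _ _ _ hx]
  simp [le_ellK_iff _ _ _ _ hx, hxt.not_ge]

lemma muEll_Ici (γ t x : ℝ) (hγ : 1 < γ) (hx : 0 < x) (hxt : x ≤ t) :
    muEll γ t (Set.Ici x) =
      ENNReal.ofReal ((t - x) * (x ^ (-γ) / γ) + x ^ (1 - γ) / (γ * (γ - 1))) := by
  rw [muEll_Ici_eq _ _ _ hx]
  have hγ0 : 0 < γ := by linarith
  have key : ∀ s, muU γ {u | x ≤ ellK t s u} =
      (Set.Ici x).indicator (fun y => ENNReal.ofReal (y ^ (-γ)) * ENNReal.ofReal (1 / γ)) (x - s) +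
      (Set.Ioc 0 (t - x)).indicator (fun _ => ENNReal.ofReal (x ^ (-γ) / γ)) s := by
    intro s
    simp only [le_ellK_iff _ _ _ _ hx, hxt, true_and]
    by_cases h1 : s ≤ 0
    · have : s ≤ t - x := by linarith
      have h2 : max x (x - s) = x - s := max_eq_right (by linarith)
      have h3 : x - s ∈ Set.Ici x := by simp [h1]
      have h4 : s ∉ Set.Ioc 0 (t - x) := fun h => h1.not_gt h.1
      rw [indicator_of_mem h3, indicator_of_notMem h4, add_zero,
        ← ENNReal.ofReal_mul (Real.rpow_nonneg (by linarith) _), mul_one_div,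
        ← muU_Ici _ _ hγ (by linarith)]
      simp [this, h2, Set.Ici]
    · push Not at h1
      have h2 : max x (x - s) = x := max_eq_left (by linarith)
      have h3 : x - s ∉ Set.Ici x := by simp [h1]
      rw [indicator_of_notMem h3, zero_add, h2]
      by_cases h5 : s ≤ t - x
      · rw [indicator_of_mem (show s ∈ Set.Ioc 0 (t - x) from ⟨h1, h5⟩), ← muU_Ici _ _ hγ hx]
        simp [h5, Set.Ici]
      · rw [indicator_of_notMem (show s ∉ Set.Ioc 0 (t - x) from fun h => h5 h.2)]
        simp [h5]
  simp_rw [key]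
  rw [lintegral_add_right _ (measurable_const.indicator measurableSet_Ioc),
    lintegral_sub_left_eq_self
      ((Set.Ici x).indicator (fun y => ENNReal.ofReal (y ^ (-γ)) * ENNReal.ofReal (1 / γ))) x,
    lintegral_indicator measurableSet_Ici, lintegral_indicator measurableSet_Ioc,
    lintegral_mul_const _ (by fun_prop), lint_rpow_Ici _ _ (by linarith) hx, setLIntegral_const,
    Real.volume_Ioc, ← ENNReal.ofReal_mul' (by positivity), ← ENNReal.ofReal_mul (by positivity),
    ← ENNReal.ofReal_add]
  · congr 1
    rw [show -γ + 1 = -(γ - 1) by ring, show 1 - γ = -(γ - 1) by ring, neg_div_neg_eq]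
    field_simp
    ring
  · rw [show -γ + 1 = -(γ - 1) by ring, neg_div_neg_eq]
    have : 0 < γ - 1 := by linarith
    positivity
  · have : 0 ≤ t - x - 0 := by linarith
    positivity

/-- The normalised tail, `z = ρ/t`. -/
noncomputable def gK (γ z r : ℝ) : ℝ :=
  if z ≤ r then r ^ γ / γ * ((1 - z / r) + (z / r) / (γ - 1)) else 0

lemma gK_nonneg (γ z r : ℝ) (hγ : 1 < γ) (hz : 0 < z) : 0 ≤ gK γ z r := by
  unfold gK
  split_ifs with h
  · have hr : 0 < r := hz.trans_le h
    have : 0 ≤ 1 - z / r := by rw [sub_nonneg, div_le_one hr]; exact h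
    have : 0 < γ - 1 := by linarith
    positivity
  · exact le_rfl

lemma gK_le (γ z r : ℝ) (hγ : 1 < γ) (hz : 0 < z) (hr : 0 < r) :
    gK γ z r ≤ r ^ γ * ((1 + 1 / (γ - 1)) / γ) := by
  have h0 : 0 < γ - 1 := by linarith
  unfold gK
  split_ifs with h
  · have h1 : z / r ≤ 1 := by rw [div_le_one hr]; exact h
    have h2 : 0 ≤ z / r := by positivity
    rw [div_mul_eq_mul_div, ← mul_div_assoc]
    gcongr
    linarith
  · positivity

lemma measurable_gK (γ z : ℝ) : Measurable (gK γ z) := by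
  unfold gK
  exact Measurable.ite measurableSet_Ici (by fun_prop) measurable_const

lemma muEll_gK (γ t ρ r : ℝ) (hγ : 1 < γ) (ht : 0 < t) (hρ : 0 < ρ) (hr : 0 < r) :
    muEll γ t (Set.Ici (ρ / r)) = ENNReal.ofReal (t * ρ ^ (-γ) * gK γ (ρ / t) r) := by
  have hx : 0 < ρ / r := by positivity
  have hiff : ρ / r ≤ t ↔ ρ / t ≤ r := by
    rw [div_le_iff₀ hr, div_le_iff₀ ht, mul_comm]
  have h0 : γ - 1 ≠ 0 := by linarith
  by_cases h : ρ / r ≤ t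
  · rw [muEll_Ici _ _ _ hγ hx h, gK, if_pos (hiff.1 h)]
    congr 1
    rw [show 1 - γ = 1 + -γ by ring, Real.rpow_add hx, Real.rpow_one,
      Real.div_rpow hρ.le hr.le, Real.rpow_neg hr.le γ]
    have := (Real.rpow_pos_of_pos hr γ).ne'
    field_simp
  · rw [muEll_Ici_gt _ _ _ hx (not_le.1 h), gK, if_neg (fun h' => h (hiff.2 h'))]
    simp

lemma muEllR_Ici (γ t ρ : ℝ) (hγ : 1 < γ) (ht : 0 < t) (hρ : 0 < ρ) (FR : Measure ℝ)
    (hFR : FR (Set.Iic 0) = 0) :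
    (muEllR γ t FR (Set.Ici ρ)).toReal = t * ρ ^ (-γ) * ∫ r, gK γ (ρ / t) r ∂FR := by
  have h : Set.Ici ρ ∩ Set.Ioi 0 = Set.Ici ρ := by
    ext z; simp only [mem_inter_iff, mem_Ici, mem_Ioi]; constructor
    · exact fun h => h.1
    · exact fun h => ⟨h, hρ.trans_le h⟩
  have hm : Measurable (fun p : ℝ × ℝ => p.1 * p.2) := by fun_prop
  have hpos : ∀ᵐ r ∂FR, 0 < r := by
    rw [ae_iff]; simpa [Set.Iic] using hFR
  rw [muEllR, Measure.restrict_apply measurableSet_Ici, h, Measure.map_apply hm measurableSet_Ici,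
    Measure.prod_apply (hm measurableSet_Ici), ← integral_const_mul,
    integral_eq_lintegral_of_nonneg_ae]
  · congr 1
    apply lintegral_congr_ae
    filter_upwards [hpos] with r hr
    rw [← muEll_gK γ t ρ r hγ ht hρ hr]
    congr 1
    ext l
    simp [div_le_iff₀' hr]
  · refine Eventually.of_forall fun r => ?_
    have := gK_nonneg γ (ρ / t) r hγ (by positivity)
    simp only [Pi.zero_apply]
    positivity
  · exact ((measurable_gK _ _).const_mul _).aestronglyMeasurable

/-- If `ρ(t) → ∞` and `ρ(t)/t → 0`, then
`μ^{ℓ,r}_t([ρ(t),∞)) = (E[R^γ]/γ)·t·ρ(t)^{-γ}·(1+o(1))` as `t → ∞`. -/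
theorem stmt_10 (γ : ℝ) (hγ1 : 1 < γ) (hγ2 : γ < 2)
    (FR : Measure ℝ) [IsProbabilityMeasure FR] (hFRpos : FR (Set.Iic 0) = 0)
    (hmom : Integrable (fun r => r ^ γ) FR)
    (ρ : ℝ → ℝ) (hρpos : ∀ t, 0 < ρ t)
    (hρinf : Tendsto ρ atTop atTop)
    (hρt : Tendsto (fun t => ρ t / t) atTop (𝓝 0)) :
    Tendsto (fun t => (muEllR γ t FR (Set.Ici (ρ t))).toReal / (t * ρ t ^ (-γ)))
      atTop (𝓝 ((∫ r, r ^ γ ∂FR) / γ)) := by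
  have hpos : ∀ᵐ r ∂FR, 0 < r := by
    rw [ae_iff]; simpa [Set.Iic] using hFRpos
  have main : Tendsto (fun t => ∫ r, gK γ (ρ t / t) r ∂FR) atTop (𝓝 (∫ r, r ^ γ / γ ∂FR)) := by
    apply tendsto_integral_filter_of_dominated_convergence
      (fun r => r ^ γ * ((1 + 1 / (γ - 1)) / γ))
    · exact Eventually.of_forall fun t => (measurable_gK _ _).aestronglyMeasurable
    · filter_upwards [eventually_gt_atTop 0] with t ht
      filter_upwards [hpos] with r hr
      have hz : 0 < ρ t / t := div_pos (hρpos t) ht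
      rw [Real.norm_of_nonneg (gK_nonneg _ _ _ hγ1 hz)]
      exact gK_le _ _ _ hγ1 hz hr
    · exact hmom.mul_const _
    · filter_upwards [hpos] with r hr
      have h1 : Tendsto (fun t => r ^ γ / γ * ((1 - (ρ t / t) / r) + ((ρ t / t) / r) / (γ - 1)))
          atTop (𝓝 (r ^ γ / γ * ((1 - 0 / r) + (0 / r) / (γ - 1)))) :=
        (((hρt.div_const r).const_sub 1).add ((hρt.div_const r).div_const (γ - 1))).const_mul _
      have h2 : r ^ γ / γ * ((1 - 0 / r) + (0 / r) / (γ - 1)) = r ^ γ / γ := by simp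
      rw [h2] at h1
      refine h1.congr' ?_
      filter_upwards [hρt.eventually_le_const hr] with t ht
      rw [gK, if_pos ht]
  rw [integral_div] at main
  refine main.congr' ?_
  filter_upwards [eventually_gt_atTop 0] with t ht
  have h3 : t * ρ t ^ (-γ) ≠ 0 := (mul_pos ht (Real.rpow_pos_of_pos (hρpos t) _)).ne'
  rw [muEllR_Ici γ t (ρ t) hγ1 ht (hρpos t) FR hFRpos, mul_div_cancel_left₀ _ h3]
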